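/- Suppose there exist positive real constants α and β such that for every odd positive integer q and every integer t ≥ α·log₂(q) + β, there exists a Hadamard matrix of order 2^t·q. Then for every integer n ≥ 2^{⌈α·log₂(3) + β⌉}, there exists a Hadamard order h with h ≤ n and n − h < 12·2^β·h^{α/(1+α)}. -/

import Mathlib

open Matrix

/-- A positive integer `m` is a Hadamard order if there is an `m × m` matrix
with entries in `{−1, 1}` satisfying `Aᵀ A = m I`. -/
def IsHadamardOrder (m : ℕ) : Prop :=
  ∃ A : Matrix (Fin m) (Fin m) ℝ,
    (∀ i j, A i j = 1 ∨ A i j = -1) ∧ Aᵀ * A = (m : ℝ) • 1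

/-!
Write `L = log₂ n` and let `x = (α L + β) / (1 + α)` be the solution of `x = α (L - x) + β`.
An odd `q` with `2 ^ t * q ≤ n` satisfies `log₂ q ≤ L - t`, so every `t ≥ x` is admissible for it.
Consecutive odd multiples of `2 ^ t` differ by `2 * 2 ^ t`, so the smallest such `t`, namely `⌈x⌉`,
leaves a gap of order `2 ^ x = 2 ^ (β / (1 + α)) * n ^ (α / (1 + α))`. When `⌈x⌉` exceeds `⌊L⌋`, use
`t = ⌊L⌋` instead: this forces `q = 1`, for which `t ≥ β` is enough.
-/

theorem exists_odd_mul_le_and_lt {d n : ℕ} (hd : 0 < d) (hdn : d ≤ n) :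
    ∃ q : ℕ, Odd q ∧ d * q ≤ n ∧ n < d * (q + 2) := by
  have hquot : 1 ≤ n / d := (Nat.one_le_div_iff hd).mpr hdn
  obtain ⟨q, hq, hq_le, hle_q⟩ : ∃ q, Odd q ∧ q ≤ n / d ∧ n / d ≤ q + 1 := by
    rcases Nat.even_or_odd (n / d) with heven | hodd
    · exact ⟨n / d - 1, Nat.Even.sub_odd hquot heven odd_one, by lia, by lia⟩
    · exact ⟨n / d, hodd, le_rfl, by lia⟩
  refine ⟨q, hq, ?_, ?_⟩
  · calc d * q ≤ d * (n / d) := Nat.mul_le_mul_left _ hq_le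
      _ ≤ n := Nat.mul_div_le _ _
  · calc n < d * (n / d + 1) := Nat.lt_mul_div_succ n hd
      _ ≤ d * (q + 2) := Nat.mul_le_mul_left _ (by lia)

theorem rpow_le_mul_rpow_of_le_mul {x y c a : ℝ} (hx : 0 ≤ x) (hy : 0 ≤ y) (hc : 1 ≤ c)
    (hxy : x ≤ c * y) (ha₀ : 0 ≤ a) (ha₁ : a ≤ 1) : x ^ a ≤ c * y ^ a :=
  calc x ^ a ≤ (c * y) ^ a := Real.rpow_le_rpow hx hxy ha₀
    _ = c ^ a * y ^ a := Real.mul_rpow (by positivity) hy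
    _ ≤ c * y ^ a := by gcongr; exact Real.rpow_le_self_of_one_le hc ha₁

theorem rpow_add_logb_mul {b x : ℝ} (hb : 0 < b) (hb_one : b ≠ 1) (hx : 0 < x) (a c : ℝ) :
    b ^ (c + Real.logb b x * a) = b ^ c * x ^ a := by
  rw [Real.rpow_add hb, Real.rpow_mul hb.le, Real.rpow_logb hb hb_one hx]

theorem logb_le_logb_sub_of_pow_mul_le {b x y : ℝ} {t : ℕ} (hb : 1 < b) (hx : 0 < x)
    (h : b ^ t * x ≤ y) : Real.logb b x ≤ Real.logb b y - t := by
  have hpow : 0 < b ^ t := by positivity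
  have hlog : Real.logb b (b ^ t * x) = t + Real.logb b x := by
    rw [Real.logb_mul hpow.ne' hx.ne', Real.logb_pow, Real.logb_self_eq_one hb, mul_one]
  linarith [Real.logb_le_logb_of_le hb (by positivity) h]

theorem lt_of_pow_log_mul_le {b n q : ℕ} (hb : 1 < b) (h : b ^ Nat.log b n * q ≤ n) : q < b :=
  Nat.lt_of_mul_lt_mul_left (h.trans_lt (Nat.lt_pow_succ_log_self hb n))

section Exponent

variable {α β : ℝ} {n : ℕ}

theorem mul_logb_add_le_of_balanced_le {q t : ℕ} (hα : 0 ≤ α) (hq : 0 < q)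
    (hqn : 2 ^ t * q ≤ n) (ht : (α * Real.logb 2 n + β) / (1 + α) ≤ t) :
    α * Real.logb 2 q + β ≤ t := by
  have hlog : Real.logb 2 q ≤ Real.logb 2 n - t :=
    logb_le_logb_sub_of_pow_mul_le one_lt_two (by exact_mod_cast hq) (by exact_mod_cast hqn)
  calc α * Real.logb 2 q + β ≤ α * (Real.logb 2 n - t) + β := by gcongr
    _ ≤ t := by rw [div_le_iff₀ (by positivity)] at ht; linarith

theorem exists_exponent_of_le_log (hα : 0 ≤ α) (hβ : 0 ≤ β) (hn : n ≠ 0)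
    (hβn : β ≤ Nat.log 2 n) :
    ∃ t : ℕ, 2 ^ t ≤ n ∧
      (2 : ℝ) ^ t ≤ 2 * ((2 : ℝ) ^ (β / (1 + α)) * (n : ℝ) ^ (α / (1 + α))) ∧
      ∀ q : ℕ, 0 < q → 2 ^ t * q ≤ n → α * Real.logb 2 q + β ≤ t := by
  set x : ℝ := (α * Real.logb 2 n + β) / (1 + α) with hx
  have hn_pos : (0 : ℝ) < n := by exact_mod_cast Nat.pos_of_ne_zero hn
  have hx_nonneg : 0 ≤ x := by
    have : 0 ≤ Real.logb 2 n :=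
      Real.logb_nonneg one_lt_two (by exact_mod_cast Nat.one_le_iff_ne_zero.mpr hn)
    positivity
  refine ⟨min ⌈x⌉₊ (Nat.log 2 n), Nat.pow_le_of_le_log hn (min_le_right _ _), ?_, ?_⟩
  · calc (2 : ℝ) ^ min ⌈x⌉₊ (Nat.log 2 n) ≤ 2 ^ ⌈x⌉₊ :=
          pow_le_pow_right₀ one_le_two (min_le_left _ _)
      _ = 2 ^ (⌈x⌉₊ : ℝ) := (Real.rpow_natCast _ _).symm
      _ ≤ 2 ^ (1 + x) := by
          gcongr
          · exact one_le_two
          · linarith [Nat.ceil_lt_add_one hx_nonneg]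
      _ = 2 * 2 ^ (β / (1 + α) + Real.logb 2 n * (α / (1 + α))) := by
          rw [Real.rpow_add two_pos, Real.rpow_one, hx]
          ring_nf
      _ = 2 * (2 ^ (β / (1 + α)) * (n : ℝ) ^ (α / (1 + α))) := by
          rw [rpow_add_logb_mul two_pos (by norm_num) hn_pos]
  · intro q hq hqn
    rcases le_total ⌈x⌉₊ (Nat.log 2 n) with hle | hle
    · rw [min_eq_left hle] at hqn ⊢
      exact mul_logb_add_le_of_balanced_le hα hq hqn (Nat.le_ceil x)
    · rw [min_eq_right hle] at hqn ⊢
      have hq_lt : q < 2 := lt_of_pow_log_mul_le one_lt_two hqn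
      obtain rfl : q = 1 := by lia
      simpa using hβn

theorem le_natLog_of_zpow_ceil_le (hβ : 0 ≤ β) (hn : (2 : ℝ) ^ ⌈β⌉ ≤ n) : β ≤ Nat.log 2 n := by
  have hpow : 2 ^ ⌈β⌉₊ ≤ n := by
    rw [← Int.natCast_ceil_eq_ceil hβ, zpow_natCast] at hn
    exact_mod_cast hn
  exact Nat.ceil_le.mp (Nat.le_log_of_pow_le one_lt_two hpow)

theorem hadamard_gap_bound_general {P : ℕ → Prop} (hα : 0 ≤ α) (hβ : 0 ≤ β)
    (hyp : ∀ q : ℕ, Odd q → ∀ t : ℕ, α * Real.logb 2 q + β ≤ t → P (2 ^ t * q))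
    (hn : (2 : ℝ) ^ ⌈β⌉ ≤ n) :
    ∃ h : ℕ, P h ∧ h ≤ n ∧
      (n : ℝ) - h < 12 * (2 : ℝ) ^ β * (h : ℝ) ^ (α / (1 + α)) := by
  have hn_pos : (0 : ℝ) < n := (zpow_pos two_pos _).trans_le hn
  obtain ⟨t, htn, ht_bound, ht⟩ := exists_exponent_of_le_log hα hβ
    (by exact_mod_cast hn_pos.ne') (le_natLog_of_zpow_ceil_le hβ hn)
  obtain ⟨q, hq, hqn, hnq⟩ := exists_odd_mul_le_and_lt (Nat.two_pow_pos t) htn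
  refine ⟨2 ^ t * q, hyp q hq t (ht q hq.pos hqn), hqn, ?_⟩
  set h : ℕ := 2 ^ t * q with hh
  have hgap : (n : ℝ) - h < 2 * 2 ^ t := by
    have : (n : ℝ) < h + 2 * 2 ^ t := by exact_mod_cast (by linarith : n < h + 2 * 2 ^ t)
    linarith
  have hn_le : (n : ℝ) ≤ 3 * h := by
    have : 2 ^ t ≤ h := Nat.le_mul_of_pos_right _ hq.pos
    exact_mod_cast (by linarith : n ≤ 3 * h)
  have hpow : (n : ℝ) ^ (α / (1 + α)) ≤ 3 * (h : ℝ) ^ (α / (1 + α)) :=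
    rpow_le_mul_rpow_of_le_mul hn_pos.le (by positivity) (by norm_num) hn_le (by positivity)
      (div_le_one_of_le₀ (by linarith) (by positivity))
  calc (n : ℝ) - h < 2 * 2 ^ t := hgap
    _ ≤ 2 * (2 * (2 ^ (β / (1 + α)) * (n : ℝ) ^ (α / (1 + α)))) := by gcongr
    _ ≤ 2 * (2 * (2 ^ β * (3 * (h : ℝ) ^ (α / (1 + α))))) := by
        gcongr
        · exact one_le_two
        · exact div_le_self hβ (by linarith)
    _ = 12 * 2 ^ β * (h : ℝ) ^ (α / (1 + α)) := by ring

end Exponent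

/-- Suppose there exist positive real constants `α`, `β` such that for every
odd positive integer `q` and every integer `t ≥ α log₂ q + β` there exists a
Hadamard matrix of order `2^t q`.  Then for every integer
`n ≥ 2^⌈α log₂ 3 + β⌉`, there exists a Hadamard order `h` with `h ≤ n` and
`n − h < 12 · 2^β · h^{α/(1+α)}`. -/
theorem hadamard_gap_bound (α β : ℝ) (hα : 0 < α) (hβ : 0 < β)
    (hyp : ∀ q : ℕ, Odd q → 0 < q → ∀ t : ℕ,
      α * Real.logb 2 q + β ≤ (t : ℝ) → IsHadamardOrder (2 ^ t * q)) :
    ∀ n : ℕ, (2 : ℝ) ^ (⌈α * Real.logb 2 3 + β⌉ : ℤ) ≤ (n : ℝ) →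
      ∃ h : ℕ, IsHadamardOrder h ∧ h ≤ n ∧
        (n : ℝ) - (h : ℝ) < 12 * (2 : ℝ) ^ β * (h : ℝ) ^ (α / (1 + α)) := by
  intro n hn
  have hceil : ⌈β⌉ ≤ ⌈α * Real.logb 2 3 + β⌉ :=
    Int.ceil_le_ceil (le_add_of_nonneg_left
      (mul_nonneg hα.le (Real.logb_nonneg one_lt_two (by norm_num))))
  exact hadamard_gap_bound_general hα.le hβ.le (fun q hq => hyp q hq hq.pos)
    ((zpow_le_zpow_right₀ one_le_two hceil).trans hn)
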